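/- The betweenness centrality measure C_B is not stable: there exist a finite node set V, an edge set E ⊆ V×V without self-loops, a weighted graph G ∈ 𝒢_{(V,E)}, and a node x ∈ V such that for every constant K > 0 there exists a weighted graph H ∈ 𝒢_{(V,E)} with |C_B^G(x) − C_B^H(x)| > K · d_{(V,E)}(G,H). Concretely, one may take the undirected 8-node graph G of Fig. 1 with all edge weights 1 and, for each ε > 0, the graph H obtained by changing the weights of the two edges (x_1,x_3) and (x_1,x_4) (in both directions) to 1+ε; then d_{(V,E)}(G,H) = 4ε while C_B^G(x_1) = 9 and C_B^H(x_1) = 0. -/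

import Mathlib

/-!
Replacing `x_1` by `x_2` (nodes `0` and `1` here) maps walks to walks, because every neighbour of
`x_1` is also a neighbour of `x_2`.

In `H`, where the edges at `x_1` cost `1 + ε` and all others cost `1`, replacing each visit to `x_1`
by a visit to `x_2` makes a walk between two nodes other than `x_1` strictly shorter as soon as
it visits `x_1` (`walkLength_map_avoid`, `length_lt_walkLength`). So no shortest path passes through
`x_1`, and its centrality is `0` (`betweenness_figWeightH`).

In `G` all weights are `1`, so the shortest paths from `x` to `y` are the walks with `hopDist x y`
edges, a finite set that can be enumerated (`shortest_iff`). The pairs that contribute are those with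
one end in `{x_3, x_5, x_6}` and the other in `{x_4, x_7, x_8}`: each of the `18` ordered pairs has two
shortest paths, exactly one of which uses `x_1`, so the centrality is `18 / 2 = 9`
(`betweenness_one`).

Since the distance between the two weightings is `4ε`, the choice `ε = 1 / K` leaves
`K * 4ε = 4 < 9`.
-/

open scoped ENNReal

/-- `p` is the tail of a walk from `x` to `y` along edges of `E`:
the node sequence of the walk is `x :: p` and consecutive nodes are joined by edges in `E`. -/
def IsWalkFrom {V : Type*} (E : Finset (V × V)) (x y : V) (p : List V) : Prop :=
  List.Chain (fun a b => (a, b) ∈ E) x p ∧ (x :: p).getLast (List.cons_ne_nil x p) = y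

/-- The length of the walk with node sequence `x :: p`: the sum of the weights of the
traversed edges (as an extended nonnegative real). -/
noncomputable def walkLength {V : Type*} (W : V × V → ℝ) (x : V) (p : List V) : ℝ≥0∞ :=
  (((x :: p).zip p).map fun e => ENNReal.ofReal (W e)).sum

/-- Shortest path length `s_G(x,y)`: the infimum of the lengths of all paths from `x`
to `y`, equal to `∞` when no such path exists. -/
noncomputable def spdist {V : Type*} (E : Finset (V × V)) (W : V × V → ℝ) (x y : V) : ℝ≥0∞ :=
  sInf {l : ℝ≥0∞ | ∃ p : List V, IsWalkFrom E x y p ∧ l = walkLength W x p}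

/-- The ℓ¹ metric `d_{(V,E)}` on the space of weighted graphs sharing
the node set `V` and edge set `E`. -/
def graphDist {V : Type*} (E : Finset (V × V)) (W W' : V × V → ℝ) : ℝ :=
  ∑ e ∈ E, |W e - W' e|

/-- `σ_{x'x''}`: the number of shortest paths from `x'` to `x''`. -/
noncomputable def numSP {V : Type*} (E : Finset (V × V)) (W : V × V → ℝ) (x' x'' : V) : ℕ :=
  Set.ncard {p : List V | IsWalkFrom E x' x'' p ∧ walkLength W x' p = spdist E W x' x''}

/-- `σ_{x'x''}(x)`: the number of shortest paths from `x'` to `x''` passing through `x`. -/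
noncomputable def numSPthrough {V : Type*} (E : Finset (V × V)) (W : V × V → ℝ)
    (x x' x'' : V) : ℕ :=
  Set.ncard {p : List V |
    IsWalkFrom E x' x'' p ∧ walkLength W x' p = spdist E W x' x'' ∧ x ∈ x' :: p}

/-- Betweenness centrality `C_B(x) = ∑_{x',x'' ∈ V, x' ≠ x ≠ x''} σ_{x'x''}(x)/σ_{x'x''}`. -/
noncomputable def betweenness {V : Type*} [Fintype V] [DecidableEq V]
    (E : Finset (V × V)) (W : V × V → ℝ) (x : V) : ℝ :=
  ∑ x' ∈ Finset.univ.filter (· ≠ x), ∑ x'' ∈ Finset.univ.filter (· ≠ x),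
    (numSPthrough E W x x' x'' : ℝ) / (numSP E W x' x'' : ℝ)

/-- The (directed version of the) edge set of the undirected 8-node graph of Fig. 1,
with nodes `0,…,7` standing for `x_1,…,x_8` and undirected edges
`{x_1,x_3}, {x_1,x_4}, {x_3,x_2}, {x_4,x_2}, {x_5,x_3}, {x_6,x_3}, {x_7,x_4}, {x_8,x_4}`. -/
def figEdges : Finset (Fin 8 × Fin 8) :=
  {(0, 2), (2, 0), (0, 3), (3, 0), (2, 1), (1, 2), (3, 1), (1, 3),
   (4, 2), (2, 4), (5, 2), (2, 5), (6, 3), (3, 6), (7, 3), (3, 7)}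

/-- The weights of the graph `H` of Fig. 1: the edges `(x_1,x_3)` and `(x_1,x_4)`
(in both directions) get weight `1 + ε`, all other edges weight `1`. -/
def figWeightH (ε : ℝ) (e : Fin 8 × Fin 8) : ℝ :=
  if e = (0, 2) ∨ e = (2, 0) ∨ e = (0, 3) ∨ e = (3, 0) then 1 + ε else 1

/-! ### Walks and their lengths -/

lemma isWalkFrom_nil {V : Type*} (E : Finset (V × V)) (x y : V) :
    IsWalkFrom E x y [] ↔ x = y := by
  simp [IsWalkFrom, List.Chain]

lemma isWalkFrom_cons {V : Type*} (E : Finset (V × V)) (x y z : V) (p : List V) :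
    IsWalkFrom E x y (z :: p) ↔ (x, z) ∈ E ∧ IsWalkFrom E z y p := by
  simp [IsWalkFrom, List.Chain, and_assoc]

lemma walkLength_nil {V : Type*} (W : V × V → ℝ) (x : V) : walkLength W x [] = 0 := by
  simp [walkLength]

lemma walkLength_cons {V : Type*} (W : V × V → ℝ) (x z : V) (p : List V) :
    walkLength W x (z :: p) = ENNReal.ofReal (W (x, z)) + walkLength W z p := by
  simp [walkLength]

lemma walkLength_one {V : Type*} (x : V) (p : List V) :
    walkLength (fun _ => 1) x p = p.length := by
  induction p generalizing x with
  | nil => simp [walkLength_nil]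
  | cons z q ih => rw [walkLength_cons, ih]; simp [add_comm]

/-! ### The perturbed graph -/

/-- The map of the node set that sends `x_1` to `x_2` and fixes every other node. -/
def avoid (v : Fin 8) : Fin 8 := if v = 0 then 1 else v

lemma avoid_edge : ∀ a b : Fin 8, (a, b) ∈ figEdges → (avoid a, avoid b) ∈ figEdges := by
  decide

lemma avoid_ne_zero : ∀ a : Fin 8, avoid a ≠ 0 := by decide

/-- Rerouting through `x_2` maps walks to walks. -/
lemma isWalkFrom_map_avoid {x y : Fin 8} {p : List (Fin 8)} (h : IsWalkFrom figEdges x y p) :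
    IsWalkFrom figEdges (avoid x) (avoid y) (p.map avoid) := by
  induction p generalizing x with
  | nil => rw [isWalkFrom_nil] at h; simp [isWalkFrom_nil, h]
  | cons z q ih =>
    rw [isWalkFrom_cons] at h
    rw [List.map_cons, isWalkFrom_cons]
    exact ⟨avoid_edge _ _ h.1, ih h.2⟩

lemma figWeightH_of_ne_zero (ε : ℝ) {a b : Fin 8} (ha : a ≠ 0) (hb : b ≠ 0) :
    figWeightH ε (a, b) = 1 := by
  simp [figWeightH, ha, hb]

/-- A walk rerouted through `x_2` uses only edges of weight `1`. -/
lemma walkLength_map_avoid (ε : ℝ) (x : Fin 8) (p : List (Fin 8)) :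
    walkLength (figWeightH ε) (avoid x) (p.map avoid) = p.length := by
  induction p generalizing x with
  | nil => simp [walkLength_nil]
  | cons z q ih =>
    rw [List.map_cons, walkLength_cons, ih,
      figWeightH_of_ne_zero ε (avoid_ne_zero x) (avoid_ne_zero z)]
    simp [add_comm]

lemma one_le_figWeightH {ε : ℝ} (hε : 0 < ε) (e : Fin 8 × Fin 8) : 1 ≤ figWeightH ε e := by
  unfold figWeightH
  split_ifs <;> linarith

lemma one_lt_figWeightH {ε : ℝ} (hε : 0 < ε) {a : Fin 8} (h : (a, 0) ∈ figEdges) :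
    1 < figWeightH ε (a, 0) := by
  have key : ∀ a : Fin 8, (a, 0) ∈ figEdges → a = 2 ∨ a = 3 := by decide
  rcases key a h with rfl | rfl <;> simp [figWeightH, hε]

lemma length_le_walkLength {ε : ℝ} (hε : 0 < ε) (x : Fin 8) (p : List (Fin 8)) :
    (p.length : ℝ≥0∞) ≤ walkLength (figWeightH ε) x p := by
  induction p generalizing x with
  | nil => simp
  | cons z q ih =>
    rw [walkLength_cons, List.length_cons, Nat.cast_succ, add_comm]
    exact add_le_add (ENNReal.one_le_ofReal.2 (one_le_figWeightH hε _)) (ih z)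

/-- A walk that enters `x_1` uses an edge of weight `1 + ε`. -/
lemma length_lt_walkLength {ε : ℝ} (hε : 0 < ε) {x y : Fin 8} {p : List (Fin 8)}
    (h : IsWalkFrom figEdges x y p) (h0 : 0 ∈ p) :
    (p.length : ℝ≥0∞) < walkLength (figWeightH ε) x p := by
  induction p generalizing x with
  | nil => simp at h0
  | cons z q ih =>
    rw [isWalkFrom_cons] at h
    rw [walkLength_cons, List.length_cons, Nat.cast_succ, add_comm]
    by_cases hz : z = 0
    · subst hz
      refine ENNReal.add_lt_add_of_lt_of_le (ENNReal.natCast_ne_top _) ?_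
        (length_le_walkLength hε _ q)
      exact ENNReal.one_lt_ofReal.2 (one_lt_figWeightH hε h.1)
    · have hq : 0 ∈ q := by
        rcases List.mem_cons.1 h0 with h' | h'
        · exact absurd h'.symm hz
        · exact h'
      exact ENNReal.add_lt_add_of_le_of_lt ENNReal.one_ne_top
        (ENNReal.one_le_ofReal.2 (one_le_figWeightH hε _)) (ih h.2 hq)

lemma numSPthrough_figWeightH {ε : ℝ} (hε : 0 < ε) {x y : Fin 8} (hx : x ≠ 0) (hy : y ≠ 0) :
    numSPthrough figEdges (figWeightH ε) 0 x y = 0 := by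
  have hempty : {p : List (Fin 8) | IsWalkFrom figEdges x y p ∧
      walkLength (figWeightH ε) x p = spdist figEdges (figWeightH ε) x y ∧ 0 ∈ x :: p} = ∅ := by
    refine Set.eq_empty_of_forall_notMem ?_
    rintro p ⟨hw, hlen, h0⟩
    have h0p : 0 ∈ p := by
      rcases List.mem_cons.1 h0 with h' | h'
      · exact absurd h'.symm hx
      · exact h'
    have hax : avoid x = x := if_neg hx
    have hay : avoid y = y := if_neg hy
    -- The rerouted walk has the same endpoints, so its length `p.length` bounds the distance.
    have hw' := isWalkFrom_map_avoid hw
    have hl' := walkLength_map_avoid ε x p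
    rw [hax] at hw' hl'
    rw [hay] at hw'
    have hle : spdist figEdges (figWeightH ε) x y ≤ p.length :=
      sInf_le ⟨p.map avoid, hw', hl'.symm⟩
    exact absurd (length_lt_walkLength hε hw h0p) (not_lt.2 (hlen ▸ hle))
  rw [numSPthrough, hempty, Set.ncard_empty]

lemma betweenness_figWeightH {ε : ℝ} (hε : 0 < ε) :
    betweenness figEdges (figWeightH ε) 0 = 0 := by
  refine Finset.sum_eq_zero fun x hx => Finset.sum_eq_zero fun y hy => ?_
  rw [numSPthrough_figWeightH hε (Finset.mem_filter.1 hx).2 (Finset.mem_filter.1 hy).2]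
  simp

/-! ### The graph with unit weights -/

/-- The least number of edges of a walk from `x` to `y`. -/
def hopDist (x y : Fin 8) : ℕ :=
  (![![0, 2, 1, 1, 2, 2, 2, 2],
     ![2, 0, 1, 1, 2, 2, 2, 2],
     ![1, 1, 0, 2, 1, 1, 3, 3],
     ![1, 1, 2, 0, 3, 3, 1, 1],
     ![2, 2, 1, 3, 0, 2, 4, 4],
     ![2, 2, 1, 3, 2, 0, 4, 4],
     ![2, 2, 3, 1, 4, 4, 0, 2],
     ![2, 2, 3, 1, 4, 4, 2, 0]] : Fin 8 → Fin 8 → ℕ) x y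

/-- The walks with `n` edges from `x` to `y`, each given by its node sequence without `x`. -/
def walks : ℕ → Fin 8 → Fin 8 → Finset (List (Fin 8))
  | 0, x, y => if x = y then {[]} else ∅
  | n + 1, x, y => (Finset.univ.filter fun z => (x, z) ∈ figEdges).biUnion fun z =>
      (walks n z y).image (List.cons z)

lemma mem_walks {n : ℕ} {x y : Fin 8} {p : List (Fin 8)} :
    p ∈ walks n x y ↔ IsWalkFrom figEdges x y p ∧ p.length = n := by
  induction n generalizing x p with
  | zero =>
    cases p with
    | nil => by_cases h : x = y <;> simp [walks, isWalkFrom_nil, h]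
    | cons z q => by_cases h : x = y <;> simp [walks, h]
  | succ n ih =>
    cases p with
    | nil => simp [walks]
    | cons z q => simp [walks, isWalkFrom_cons, ih, and_assoc]

lemma hopDist_self : ∀ x : Fin 8, hopDist x x = 0 := by decide

lemma hopDist_edge : ∀ x z y : Fin 8, (x, z) ∈ figEdges → hopDist x y ≤ hopDist z y + 1 := by
  decide +kernel

/-- Each edge lowers the distance to `y` by at most one (`hopDist_edge`), so a walk to `y` has at
least `hopDist x y` edges. -/
lemma hopDist_le_length {x y : Fin 8} {p : List (Fin 8)} (h : IsWalkFrom figEdges x y p) :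
    hopDist x y ≤ p.length := by
  induction p generalizing x with
  | nil => rw [isWalkFrom_nil] at h; simp [h, hopDist_self]
  | cons z q ih =>
    rw [isWalkFrom_cons] at h
    exact (hopDist_edge x z y h.1).trans (Nat.succ_le_succ (ih h.2))

lemma walks_hopDist_nonempty : ∀ x y : Fin 8, (walks (hopDist x y) x y).Nonempty := by
  decide +kernel

lemma spdist_one (x y : Fin 8) : spdist figEdges (fun _ => 1) x y = hopDist x y := by
  apply le_antisymm
  · obtain ⟨p, hp⟩ := walks_hopDist_nonempty x y
    obtain ⟨hw, hl⟩ := mem_walks.1 hp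
    exact sInf_le ⟨p, hw, by rw [walkLength_one, hl]⟩
  · refine le_sInf ?_
    rintro l ⟨p, hw, rfl⟩
    rw [walkLength_one]
    exact_mod_cast hopDist_le_length hw

/-- Under unit weights the shortest paths form an explicit finite set. -/
lemma shortest_iff {x y : Fin 8} {p : List (Fin 8)} :
    IsWalkFrom figEdges x y p ∧ walkLength (fun _ => 1) x p = spdist figEdges (fun _ => 1) x y ↔
      p ∈ walks (hopDist x y) x y := by
  rw [mem_walks, spdist_one, walkLength_one, Nat.cast_inj]

lemma numSP_one (x y : Fin 8) :
    numSP figEdges (fun _ => 1) x y = (walks (hopDist x y) x y).card := by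
  rw [numSP, ← Set.ncard_coe_finset]
  congr 1
  ext p
  exact shortest_iff

lemma numSPthrough_one (x y : Fin 8) :
    numSPthrough figEdges (fun _ => 1) 0 x y =
      ((walks (hopDist x y) x y).filter fun p => 0 ∈ x :: p).card := by
  rw [numSPthrough, ← Set.ncard_coe_finset]
  congr 1
  ext p
  rw [Set.mem_ofPred_eq, ← and_assoc, shortest_iff, Finset.mem_coe, Finset.mem_filter]

/-- `x` and `y` lie on different sides: one in `{x_3, x_5, x_6}`, the other in
`{x_4, x_7, x_8}`. -/
def OppositeSides (x y : Fin 8) : Prop :=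
  (x ∈ ({2, 4, 5} : Finset (Fin 8)) ∧ y ∈ ({3, 6, 7} : Finset (Fin 8))) ∨
    (x ∈ ({3, 6, 7} : Finset (Fin 8)) ∧ y ∈ ({2, 4, 5} : Finset (Fin 8)))

instance (x y : Fin 8) : Decidable (OppositeSides x y) := by unfold OppositeSides; infer_instance

lemma card_through : ∀ x y : Fin 8, x ≠ 0 → y ≠ 0 →
    ((walks (hopDist x y) x y).filter fun p => 0 ∈ x :: p).card =
      if OppositeSides x y then 1 else 0 := by
  decide +kernel

lemma card_walks : ∀ x y : Fin 8, OppositeSides x y → (walks (hopDist x y) x y).card = 2 := by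
  decide +kernel

lemma card_opposite :
    ∑ x ∈ Finset.univ.filter (· ≠ (0 : Fin 8)), ∑ y ∈ Finset.univ.filter (· ≠ (0 : Fin 8)),
      (if OppositeSides x y then 1 else 0) = 18 := by
  decide +kernel

lemma betweenness_one : betweenness figEdges (fun _ => 1) (0 : Fin 8) = 9 := by
  have hterm : ∀ x ∈ Finset.univ.filter (· ≠ (0 : Fin 8)),
      ∀ y ∈ Finset.univ.filter (· ≠ (0 : Fin 8)),
      (numSPthrough figEdges (fun _ => 1) 0 x y : ℝ) / (numSP figEdges (fun _ => 1) x y : ℝ) =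
        ((if OppositeSides x y then 1 else 0 : ℕ) : ℝ) / 2 := by
    intro x hx y hy
    rw [numSPthrough_one, numSP_one,
      card_through x y (Finset.mem_filter.1 hx).2 (Finset.mem_filter.1 hy).2]
    by_cases h : OppositeSides x y
    · simp [h, card_walks x y h]
    · simp [h]
  rw [betweenness, Finset.sum_congr rfl fun x hx => Finset.sum_congr rfl (hterm x hx)]
  simp_rw [← Finset.sum_div, ← Nat.cast_sum]
  rw [card_opposite]
  norm_num

/-! ### The distance between the two weightings -/

lemma graphDist_figWeightH {ε : ℝ} (hε : 0 < ε) :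
    graphDist figEdges (fun _ => 1) (figWeightH ε) = 4 * ε := by
  have hterm : ∀ e : Fin 8 × Fin 8, |1 - figWeightH ε e| =
      if e = (0, 2) ∨ e = (2, 0) ∨ e = (0, 3) ∨ e = (3, 0) then ε else 0 := by
    intro e
    unfold figWeightH
    split_ifs <;> simp [abs_of_pos hε]
  have hcard : (figEdges.filter fun e =>
      e = (0, 2) ∨ e = (2, 0) ∨ e = (0, 3) ∨ e = (3, 0)).card = 4 := by decide
  simp only [graphDist, hterm]
  rw [← Finset.sum_filter, Finset.sum_const, hcard]
  simp

/-- Proposition 3: betweenness centrality is not stable.  In the graph `G`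
of Fig. 1 (all weights `1`) the node `x_1` has `C_B^G(x_1) = 9`, while for every `ε > 0`
the perturbed graph `H` has `d_{(V,E)}(G,H) = 4ε` and `C_B^H(x_1) = 0`; consequently no
constant `K > 0` can satisfy `|C_B^G(x_1) - C_B^H(x_1)| ≤ K ⬝ d_{(V,E)}(G,H)` for all
`H ∈ 𝒢_{(V,E)}`. -/
theorem betweenness_not_stable :
    (∀ ε : ℝ, 0 < ε →
      graphDist figEdges (fun _ => 1) (figWeightH ε) = 4 * ε ∧
      betweenness figEdges (fun _ => 1) (0 : Fin 8) = 9 ∧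
      betweenness figEdges (figWeightH ε) (0 : Fin 8) = 0) ∧
    (∀ K : ℝ, 0 < K → ∃ W' : Fin 8 × Fin 8 → ℝ, (∀ e ∈ figEdges, 0 < W' e) ∧
      K * graphDist figEdges (fun _ => 1) W' <
        |betweenness figEdges (fun _ => 1) (0 : Fin 8) -
          betweenness figEdges W' (0 : Fin 8)|) := by
  refine ⟨fun ε hε => ⟨graphDist_figWeightH hε, betweenness_one, betweenness_figWeightH hε⟩,
    fun K hK => ?_⟩
  have hε : 0 < 1 / K := by positivity
  refine ⟨figWeightH (1 / K), fun e _ => zero_lt_one.trans_le (one_le_figWeightH hε e), ?_⟩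
  rw [graphDist_figWeightH hε, betweenness_one, betweenness_figWeightH hε]
  have h4 : K * (4 * (1 / K)) = 4 := by field_simp
  rw [h4]
  norm_num
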